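/- For any joint distribution P_{XY} on discrete alphabets and any positive integers K < M, it holds that I(X;[Y]_K) ≥ ((K-1)/M) · I(X;[Y]_M). -/

import Mathlib

/-!
For a finite-valued `Y`, the mutual information `I(X;Y)` is the sum over the values `y` of
`P_Y(y) · D(P_{X|Y=y} ‖ P_X)`, and each of these terms is nonnegative and depends only on the event
`Y = y` and on the law of `X`. Given an `M`-level quantizer `f`, some `K - 1` of the `M` terms of
`I(X; f(Y))` carry at least the fraction `(K - 1) / M` of the sum. Keeping these `K - 1` cells
and merging all others into one further cell gives a `K`-level quantizer which retains the kept
terms.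

The density of `P_{X|Y=y}` with respect to `P_X` is at most `1 / P_Y(y)`. Hence all the series
converge, and the information carried by a quantizer is bounded in terms of its number of levels.
-/

open scoped BigOperators

/-- Mutual information (in bits) of a joint probability mass function `p` on `𝒳 × 𝒴`,
with the convention `0 · log 0 = 0`. -/
noncomputable def miBits {𝒳 𝒴 : Type*} (p : 𝒳 → 𝒴 → ℝ) : ℝ :=
  ∑' x, ∑' y, p x y * Real.logb 2 (p x y / ((∑' y', p x y') * (∑' x', p x' y)))

/-- `p` is a joint probability mass function. -/
def IsJointPMF {𝒳 𝒴 : Type*} (p : 𝒳 → 𝒴 → ℝ) : Prop :=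
  (∀ x y, 0 ≤ p x y) ∧ Summable (fun xy : 𝒳 × 𝒴 => p xy.1 xy.2) ∧ (∑' x, ∑' y, p x y) = 1

/-- Joint pmf of `(X, f(Y))` when `(X,Y) ~ p` and `f` is a deterministic `M`-level quantizer. -/
noncomputable def quantJoint {𝒳 𝒴 : Type*} (p : 𝒳 → 𝒴 → ℝ) {M : ℕ} (f : 𝒴 → Fin M) :
    𝒳 → Fin M → ℝ :=
  fun x m => ∑' y, if f y = m then p x y else 0

/-- `I(X;[Y]_M)`: the best mutual information achievable by a deterministic `M`-level
quantizer of `Y`. -/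
noncomputable def quantMI {𝒳 𝒴 : Type*} (p : 𝒳 → 𝒴 → ℝ) (M : ℕ) : ℝ :=
  ⨆ f : 𝒴 → Fin M, miBits (quantJoint p f)

/-- The information distillation function `ID_M(K, β)`. -/
noncomputable def ID (M K : ℕ) (β : ℝ) : ℝ :=
  sInf {v | ∃ p : Fin K → ℕ → ℝ, IsJointPMF p ∧ β ≤ miBits p ∧ v = quantMI p M}

/-- Binary entropy function (bits). -/
noncomputable def hBin (t : ℝ) : ℝ :=
  -(t * Real.logb 2 t) - (1 - t) * Real.logb 2 (1 - t)

section RelativeEntropy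

/-- Relative entropy `D(a ‖ b)` in bits, for nonnegative functions that need not be normalized, so
that a joint law can be compared with a product one letter at a time. Junk where `b` vanishes and
`a` does not, or where the series diverges; a bound `a ≤ C * b` excludes both. -/
noncomputable def relEntropyBits {ι : Type*} (a b : ι → ℝ) : ℝ :=
  ∑' i, a i * Real.logb 2 (a i / b i)

theorem sub_div_log_two_le_mul_logb_div {a b : ℝ} (ha : 0 ≤ a) (hb : 0 ≤ b)
    (hab : b = 0 → a = 0) : (a - b) / Real.log 2 ≤ a * Real.logb 2 (a / b) := by
  suffices h : a - b ≤ a * Real.log (a / b) by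
    rw [Real.logb, ← mul_div_assoc]
    exact div_le_div_of_nonneg_right h (Real.log_pos one_lt_two).le
  rcases hb.eq_or_lt with rfl | hb
  · simp [hab rfl]
  calc a - b = b * (a / b - 1) := by field_simp
    _ ≤ b * (a / b * Real.log (a / b)) := by
      gcongr
      exact Real.self_sub_one_le_mul_log (by positivity)
    _ = a * Real.log (a / b) := by field_simp

theorem mul_logb_div_le_mul_logb {a b C : ℝ} (ha : 0 ≤ a) (hb : 0 ≤ b) (hab : a ≤ C * b) :
    a * Real.logb 2 (a / b) ≤ a * Real.logb 2 C := by
  rcases ha.eq_or_lt with rfl | ha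
  · simp
  have hb : 0 < b := hb.lt_of_ne' fun h => by
    rw [h, mul_zero] at hab
    exact hab.not_gt ha
  gcongr
  · exact one_lt_two
  · exact (div_le_iff₀ hb).2 hab

variable {ι : Type*} {a b : ι → ℝ} {C : ℝ}

theorem summable_mul_logb_div (ha : ∀ i, 0 ≤ a i) (hb : ∀ i, 0 ≤ b i)
    (hab : ∀ i, a i ≤ C * b i) (hbs : Summable b) :
    Summable fun i => a i * Real.logb 2 (a i / b i) := by
  have has : Summable a := .of_nonneg_of_le ha hab (hbs.mul_left C)
  have hlower : Summable fun i => (a i - b i) / Real.log 2 := (has.sub hbs).div_const _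
  have hupper : Summable fun i => a i * Real.logb 2 C := has.mul_right _
  have hdiff := Summable.of_nonneg_of_le
    (fun i => sub_nonneg.2 <| sub_div_log_two_le_mul_logb_div (ha i) (hb i) fun h =>
      le_antisymm (by simpa [h] using hab i) (ha i))
    (fun i => sub_le_sub_right (mul_logb_div_le_mul_logb (ha i) (hb i) (hab i)) _)
    (hupper.sub hlower)
  simpa using hdiff.add hlower

theorem tsum_sub_tsum_div_log_two_le_relEntropyBits (ha : ∀ i, 0 ≤ a i) (hb : ∀ i, 0 ≤ b i)
    (hab : ∀ i, a i ≤ C * b i) (hbs : Summable b) :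
    (∑' i, a i - ∑' i, b i) / Real.log 2 ≤ relEntropyBits a b := by
  have has : Summable a := .of_nonneg_of_le ha hab (hbs.mul_left C)
  rw [← has.tsum_sub hbs, ← tsum_div_const]
  exact ((has.sub hbs).div_const _).tsum_le_tsum
    (fun i => sub_div_log_two_le_mul_logb_div (ha i) (hb i) fun h =>
      le_antisymm (by simpa [h] using hab i) (ha i))
    (summable_mul_logb_div ha hb hab hbs)

theorem relEntropyBits_le_tsum_mul_logb (ha : ∀ i, 0 ≤ a i) (hb : ∀ i, 0 ≤ b i)
    (hab : ∀ i, a i ≤ C * b i) (hbs : Summable b) :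
    relEntropyBits a b ≤ (∑' i, a i) * Real.logb 2 C := by
  have has : Summable a := .of_nonneg_of_le ha hab (hbs.mul_left C)
  rw [← tsum_mul_right]
  exact (summable_mul_logb_div ha hb hab hbs).tsum_le_tsum
    (fun i => mul_logb_div_le_mul_logb (ha i) (hb i) (hab i)) (has.mul_right _)

end RelativeEntropy

section LetterInfo

/-- The contribution `P_Y(y) · D(P_{X|Y=y} ‖ P_X)` of the letter `y` to `I(X;Y)`, in bits. The
factor `P_Y(y)` is absorbed in both arguments of the divergence, so that no conditional law is
needed. -/
noncomputable def letterInfo {𝒳 𝒴 : Type*} (p : 𝒳 → 𝒴 → ℝ) (y : 𝒴) : ℝ :=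
  relEntropyBits (fun x => p x y) (fun x => (∑' y', p x y') * ∑' x', p x' y)

namespace IsJointPMF

variable {𝒳 𝒴 : Type*} {p : 𝒳 → 𝒴 → ℝ}

theorem summable_row (hp : IsJointPMF p) (x : 𝒳) : Summable fun y => p x y :=
  hp.2.1.prod_factor x

theorem summable_col (hp : IsJointPMF p) (y : 𝒴) : Summable fun x => p x y :=
  hp.2.1.prod_symm.prod_factor y

theorem summable_marginal (hp : IsJointPMF p) : Summable fun x => ∑' y, p x y :=
  hp.2.1.prod

theorem marginal_mul_nonneg (hp : IsJointPMF p) (x : 𝒳) (y : 𝒴) :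
    0 ≤ (∑' y', p x y') * ∑' x', p x' y :=
  mul_nonneg (tsum_nonneg (hp.1 x)) (tsum_nonneg fun x' => hp.1 x' y)

theorem le_inv_mul_marginal_mul (hp : IsJointPMF p) (x : 𝒳) (y : 𝒴) :
    p x y ≤ (∑' x', p x' y)⁻¹ * ((∑' y', p x y') * ∑' x', p x' y) := by
  have hrow : p x y ≤ ∑' y', p x y' := (hp.summable_row x).le_tsum y fun y' _ => hp.1 x y'
  have hcol : p x y ≤ ∑' x', p x' y := (hp.summable_col y).le_tsum x fun x' _ => hp.1 x' y
  rcases eq_or_ne (∑' x', p x' y) 0 with h | h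
  · simpa [h] using hcol
  · rwa [mul_comm (∑' y', p x y'), inv_mul_cancel_left₀ h]

theorem summable_letterInfo_term (hp : IsJointPMF p) (y : 𝒴) :
    Summable fun x => p x y * Real.logb 2 (p x y / ((∑' y', p x y') * ∑' x', p x' y)) :=
  summable_mul_logb_div (hp.1 · y) (hp.marginal_mul_nonneg · y) (hp.le_inv_mul_marginal_mul · y)
    (hp.summable_marginal.mul_right _)

theorem letterInfo_nonneg (hp : IsJointPMF p) (y : 𝒴) : 0 ≤ letterInfo p y := by
  have h := tsum_sub_tsum_div_log_two_le_relEntropyBits (hp.1 · y) (hp.marginal_mul_nonneg · y)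
    (hp.le_inv_mul_marginal_mul · y) (hp.summable_marginal.mul_right _)
  rwa [tsum_mul_right, hp.2.2, one_mul, sub_self, zero_div] at h

theorem letterInfo_le (hp : IsJointPMF p) (y : 𝒴) : letterInfo p y ≤ 1 / Real.log 2 := by
  set q := ∑' x, p x y
  have hq : 0 ≤ q := tsum_nonneg fun x => hp.1 x y
  calc letterInfo p y ≤ q * Real.logb 2 q⁻¹ :=
      relEntropyBits_le_tsum_mul_logb (hp.1 · y) (hp.marginal_mul_nonneg · y)
        (hp.le_inv_mul_marginal_mul · y) (hp.summable_marginal.mul_right _)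
    _ = Real.negMulLog q / Real.log 2 := by
      rw [Real.logb_inv, Real.logb, Real.negMulLog]
      ring
    _ ≤ 1 / Real.log 2 := by
      have := Real.log_pos one_lt_two
      gcongr
      linarith [Real.negMulLog_le_one_sub_self hq]

theorem miBits_eq_sum_letterInfo [Fintype 𝒴] (hp : IsJointPMF p) :
    miBits p = ∑ y, letterInfo p y := by
  simp only [miBits, letterInfo, relEntropyBits]
  rw [← Summable.tsum_finsetSum fun y _ => hp.summable_letterInfo_term y]
  exact tsum_congr fun x => tsum_fintype _

theorem miBits_le [Fintype 𝒴] (hp : IsJointPMF p) :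
    miBits p ≤ Fintype.card 𝒴 * (1 / Real.log 2) := by
  rw [hp.miBits_eq_sum_letterInfo, ← nsmul_eq_mul]
  exact Finset.sum_le_card_nsmul _ _ _ fun y _ => hp.letterInfo_le y

end IsJointPMF

end LetterInfo

section Quantizer

variable {𝒳 𝒴 : Type*} {p : 𝒳 → 𝒴 → ℝ} {k K M : ℕ}

namespace IsJointPMF

theorem quantJoint_nonneg (hp : IsJointPMF p) (f : 𝒴 → Fin M) (x : 𝒳) (m : Fin M) :
    0 ≤ quantJoint p f x m :=
  tsum_nonneg fun y => ite_nonneg (hp.1 x y) le_rfl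

theorem tsum_quantJoint (hp : IsJointPMF p) (f : 𝒴 → Fin M) (x : 𝒳) :
    ∑' m, quantJoint p f x m = ∑' y, p x y := by
  have hcell (m : Fin M) : Summable fun y => if f y = m then p x y else 0 :=
    .of_nonneg_of_le (fun y => ite_nonneg (hp.1 x y) le_rfl)
      (fun y => by split_ifs <;> simp [hp.1 x y]) (hp.summable_row x)
  simp only [tsum_fintype, quantJoint]
  rw [← Summable.tsum_finsetSum fun m _ => hcell m]
  simp

theorem isJointPMF_quantJoint (hp : IsJointPMF p) (f : 𝒴 → Fin M) :
    IsJointPMF (quantJoint p f) := by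
  refine ⟨hp.quantJoint_nonneg f, ?_, by simpa only [hp.tsum_quantJoint] using hp.2.2⟩
  refine (summable_prod_of_nonneg fun xm => hp.quantJoint_nonneg f xm.1 xm.2).2
    ⟨fun x => .of_finite, ?_⟩
  simpa only [hp.tsum_quantJoint] using hp.summable_marginal

theorem letterInfo_quantJoint_congr (hp : IsJointPMF p) {f : 𝒴 → Fin M} {g : 𝒴 → Fin K}
    {m : Fin M} {n : Fin K} (h : ∀ y, f y = m ↔ g y = n) :
    letterInfo (quantJoint p f) m = letterInfo (quantJoint p g) n := by
  have hcell (x : 𝒳) : quantJoint p f x m = quantJoint p g x n := by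
    simp only [quantJoint, h]
  simp only [letterInfo, hp.tsum_quantJoint, hcell]

theorem le_quantMI (hp : IsJointPMF p) (f : 𝒴 → Fin M) :
    miBits (quantJoint p f) ≤ quantMI p M :=
  le_ciSup (f := fun f : 𝒴 → Fin M => miBits (quantJoint p f))
    ⟨_, Set.forall_mem_range.2 fun f => (hp.isJointPMF_quantJoint f).miBits_le⟩ f

end IsJointPMF

/-- The relabelling of `M` cells that keeps the cells `e 0, …, e (k - 1)` apart and merges all other
cells into a single one, labelled `k`. -/
noncomputable def mergeCells (e : Fin k → Fin M) : Fin M → Fin (k + 1) :=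
  Function.extend e Fin.castSucc fun _ => Fin.last k

theorem mergeCells_eq_castSucc_iff {e : Fin k → Fin M} (he : e.Injective) {m : Fin M} {i : Fin k} :
    mergeCells e m = i.castSucc ↔ m = e i := by
  constructor
  · intro h
    by_cases hm : ∃ j, e j = m
    · obtain ⟨j, rfl⟩ := hm
      rw [mergeCells, he.extend_apply, Fin.castSucc_inj] at h
      rw [h]
    · rw [mergeCells, Function.extend_apply' _ _ _ hm] at h
      exact absurd h.symm i.castSucc_ne_last
  · rintro rfl
    exact he.extend_apply _ _ i

theorem IsJointPMF.sum_letterInfo_le_miBits_mergeCells (hp : IsJointPMF p) (f : 𝒴 → Fin M)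
    {e : Fin k → Fin M} (he : e.Injective) :
    ∑ i, letterInfo (quantJoint p f) (e i) ≤
      miBits (quantJoint p (mergeCells e ∘ f)) := by
  have hkept (i : Fin k) : letterInfo (quantJoint p f) (e i) =
      letterInfo (quantJoint p (mergeCells e ∘ f)) i.castSucc :=
    hp.letterInfo_quantJoint_congr fun y => (mergeCells_eq_castSucc_iff he).symm
  have hpg := hp.isJointPMF_quantJoint (mergeCells e ∘ f)
  rw [hpg.miBits_eq_sum_letterInfo, Fin.sum_univ_castSucc, Finset.sum_congr rfl fun i _ => hkept i]
  exact le_add_of_nonneg_right (hpg.letterInfo_nonneg _)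

theorem exists_mul_sum_le_sum_translate {G ι 𝕜 : Type*} [AddGroup G] [Fintype G] [Fintype ι]
    [Field 𝕜] [LinearOrder 𝕜] [IsStrictOrderedRing 𝕜] (c : ι → G) (D : G → 𝕜) :
    ∃ g, (Fintype.card ι : 𝕜) / Fintype.card G * ∑ h, D h ≤ ∑ i, D (g + c i) := by
  have hsum : ∑ g, ∑ i, D (g + c i) =
      ∑ _g : G, (Fintype.card ι : 𝕜) / Fintype.card G * ∑ h, D h := by
    have htranslate (i : ι) : ∑ g, D (g + c i) = ∑ h, D h :=
      Equiv.sum_comp (Equiv.addRight (c i)) D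
    rw [Finset.sum_comm]
    simp only [htranslate, Finset.sum_const, Finset.card_univ, nsmul_eq_mul]
    field_simp
  obtain ⟨g, -, hg⟩ := Finset.exists_le_of_sum_le Finset.univ_nonempty hsum.ge
  exact ⟨g, hg⟩

theorem exists_injective_mul_sum_le_sum (hM : 0 < M) (hk : k ≤ M) (D : Fin M → ℝ) :
    ∃ e : Fin k → Fin M, e.Injective ∧ (k : ℝ) / M * ∑ m, D m ≤ ∑ i, D (e i) := by
  have : NeZero M := ⟨hM.ne'⟩
  obtain ⟨j, hj⟩ := exists_mul_sum_le_sum_translate (Fin.castLE hk) D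
  exact ⟨fun i => j + Fin.castLE hk i, (add_right_injective j).comp (Fin.castLE_injective hk),
    by simpa using hj⟩

theorem IsJointPMF.mul_miBits_le_quantMI_succ (hp : IsJointPMF p) (hM : 0 < M) (hk : k ≤ M)
    (f : 𝒴 → Fin M) :
    (k : ℝ) / M * miBits (quantJoint p f) ≤ quantMI p (k + 1) := by
  obtain ⟨e, he, hsum⟩ :=
    exists_injective_mul_sum_le_sum hM hk (letterInfo (quantJoint p f))
  calc (k : ℝ) / M * miBits (quantJoint p f)
      ≤ ∑ i, letterInfo (quantJoint p f) (e i) := by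
        rwa [(hp.isJointPMF_quantJoint f).miBits_eq_sum_letterInfo]
    _ ≤ miBits (quantJoint p (mergeCells e ∘ f)) :=
        hp.sum_letterInfo_le_miBits_mergeCells f he
    _ ≤ quantMI p (k + 1) := hp.le_quantMI _

end Quantizer

theorem double_quantization_general {𝒳 𝒴 : Type*} (p : 𝒳 → 𝒴 → ℝ) (hp : IsJointPMF p) (K M : ℕ)
    (hK : 0 < K) (hM : 0 < M) (hKM : K ≤ M + 1) :
    ((K : ℝ) - 1) / (M : ℝ) * quantMI p M ≤ quantMI p K := by
  obtain ⟨k, rfl⟩ := Nat.exists_eq_add_one.2 hK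
  have : Nonempty (Fin M) := ⟨⟨0, hM⟩⟩
  rw [Nat.cast_add_one, add_sub_cancel_right, quantMI, Real.mul_iSup_of_nonneg (by positivity)]
  exact ciSup_le fun f => hp.mul_miBits_le_quantMI_succ hM (Nat.le_of_succ_le_succ hKM) f

/-- Corollary 1: double quantization. For `K < M`,
`I(X;[Y]_K) ≥ ((K-1)/M) I(X;[Y]_M)`. -/
theorem double_quantization {𝒳 𝒴 : Type*} [Countable 𝒳] [Countable 𝒴]
    (p : 𝒳 → 𝒴 → ℝ) (hp : IsJointPMF p) (K M : ℕ) (hK : 0 < K) (hKM : K < M) :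
    ((K : ℝ) - 1) / (M : ℝ) * quantMI p M ≤ quantMI p K :=
  double_quantization_general p hp K M hK (hK.trans hKM) (Nat.le_succ_of_le hKM.le)
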